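/- arXiv:1806.00521 — 2 statements merged into one kernel-verified Lean document; each statement's English description precedes it below -/
import Mathlib

section
/- Let μ_N denote the expected number of vertices of outdegree two in a lemniscate tree sampled uniformly at random from LT_N. Then μ_N = (1 − 2/π)·N + O(1); that is, there exists a constant C > 0 such that |μ_N − (1 − 2/π)·N| ≤ C for all N ≥ 1. -/
/-!
A lemniscate tree on `N` vertices is a rooted nonplane binary tree whose vertices are
bijectively labeled `1,…,N` (here: `Fin N`, with vertex `0` playing the role of label 1)
such that labels strictly increase along every path directed away from the root.
Since children are unordered, such a tree is faithfully encoded by its parent function: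
vertex `0` is the root (it has no parent), every other vertex has a parent with strictly
smaller label, and every vertex has at most two children.
-/
def LemniscateTree (N : ℕ) : Type :=
  {f : Fin N → Option (Fin N) //
    (∀ i : Fin N, f i = none ↔ (i : ℕ) = 0) ∧
    (∀ i j : Fin N, f i = some j → (j : ℕ) < (i : ℕ)) ∧
    (∀ j : Fin N, (Finset.univ.filter fun i => f i = some j).card ≤ 2)}

instance (N : ℕ) : Fintype (LemniscateTree N) := by
  unfold LemniscateTree; infer_instance

/-- The number of vertices of outdegree two (i.e. with exactly two children). -/
def outdegTwoCount {N : ℕ} (T : LemniscateTree N) : ℕ :=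
  (Finset.univ.filter fun j : Fin N =>
    (Finset.univ.filter fun i => T.1 i = some j).card = 2).card

/-- `μ_N`: the mean number of outdegree-two vertices of a uniformly random
lemniscate tree on `N` vertices. -/
noncomputable def lemMean (N : ℕ) : ℝ :=
  (∑ T : LemniscateTree N, (outdegTwoCount T : ℝ)) / (Fintype.card (LemniscateTree N))


open Finset in
/-- outdegree -/
def odeg {N : ℕ} (f : Fin N → Option (Fin N)) (j : Fin N) : ℕ :=
  (Finset.univ.filter fun i => f i = some j).card

def IsLem {N : ℕ} (f : Fin N → Option (Fin N)) : Prop :=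
    (∀ i : Fin N, f i = none ↔ (i : ℕ) = 0) ∧
    (∀ i j : Fin N, f i = some j → (j : ℕ) < (i : ℕ)) ∧
    (∀ j : Fin N, (Finset.univ.filter fun i => f i = some j).card ≤ 2)

/-- attach a new vertex as a child of `j` -/
def extFun {N : ℕ} (f : Fin N → Option (Fin N)) (j : Fin N) :
    Fin (N + 1) → Option (Fin (N + 1)) :=
  Fin.snoc (α := fun _ => Option (Fin (N + 1))) (fun i => (f i).map Fin.castSucc) (some j.castSucc)

lemma extFun_castSucc {N : ℕ} (f : Fin N → Option (Fin N)) (j i : Fin N) :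
    extFun f j i.castSucc = (f i).map Fin.castSucc := by
  simp [extFun]

lemma extFun_last {N : ℕ} (f : Fin N → Option (Fin N)) (j : Fin N) :
    extFun f j (Fin.last N) = some j.castSucc := by
  simp [extFun]

lemma map_castSucc_eq {N : ℕ} (o : Option (Fin N)) (k : Fin N) :
    o.map Fin.castSucc = some k.castSucc ↔ o = some k := by
  cases o <;> simp

lemma odeg_ext_castSucc {N : ℕ} (f : Fin N → Option (Fin N)) (j k : Fin N) :
    odeg (extFun f j) k.castSucc = odeg f k + if j = k then 1 else 0 := by
  unfold odeg
  rw [Finset.card_filter, Finset.card_filter, Fin.sum_univ_castSucc]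
  simp only [extFun_castSucc, extFun_last, map_castSucc_eq]
  simp

lemma odeg_ext_last {N : ℕ} (f : Fin N → Option (Fin N)) (j : Fin N) :
    odeg (extFun f j) (Fin.last N) = 0 := by
  unfold odeg
  rw [Finset.card_eq_zero, Finset.filter_eq_empty_iff]
  intro i _
  refine Fin.lastCases ?_ (fun i => ?_) i
  · rw [extFun_last]; simp [Fin.castSucc_ne_last]
  · rw [extFun_castSucc]; cases f i <;> simp [Fin.castSucc_ne_last]

lemma isLem_ext {N : ℕ} (hN : 1 ≤ N) (f : Fin N → Option (Fin N)) (j : Fin N) :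
    IsLem (extFun f j) ↔ IsLem f ∧ odeg f j ≤ 1 := by
  unfold IsLem
  change (_ ∧ _ ∧ ∀ k, odeg (extFun f j) k ≤ 2) ↔ (_ ∧ _ ∧ ∀ k, odeg f k ≤ 2) ∧ _
  simp only [Fin.forall_fin_succ', odeg_ext_castSucc, odeg_ext_last, extFun_castSucc, extFun_last,
    map_castSucc_eq]
  constructor
  · rintro ⟨⟨h1, -⟩, ⟨h2, -⟩, h3, -⟩
    refine ⟨⟨fun i => by simpa using h1 i, fun i k h => by simpa using (h2 i).1 k h,
      fun k => le_trans (Nat.le_add_right _ _) (h3 k)⟩, ?_⟩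
    have := h3 j
    simp at this; omega
  · rintro ⟨⟨h1, h2, h3⟩, h4⟩
    refine ⟨⟨fun i => by simpa using h1 i, by simp; omega⟩,
      ⟨fun i => ⟨fun k h => by simpa using h2 i k h, ?_⟩, fun k _ => by simp, ?_⟩, fun k => ?_, by simp⟩
    · intro h
      cases hh : f i <;> simp [hh, Fin.castSucc_ne_last] at h
    · intro h; simp [Fin.castSucc_ne_last] at h
    · split_ifs with h
      · subst h; omega
      · simpa using h3 k

lemma isLem_exists {N : ℕ} (hN : 1 ≤ N) (g : Fin (N + 1) → Option (Fin (N + 1))) (hg : IsLem g) :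
    ∃ f j, g = extFun f j := by
  obtain ⟨h1, h2, h3⟩ := hg
  have hl : ∃ j : Fin N, g (Fin.last N) = some j.castSucc := by
    cases h : g (Fin.last N) with
    | none => have := (h1 _).1 h; simp at this; omega
    | some k =>
      have := h2 _ _ h
      simp at this
      exact ⟨⟨k, this⟩, by simp⟩
  have hc : ∀ i : Fin N, ∃ o : Option (Fin N), g i.castSucc = o.map Fin.castSucc := by
    intro i
    cases h : g i.castSucc with
    | none => exact ⟨none, rfl⟩
    | some k =>
      have := h2 _ _ h
      simp at this
      exact ⟨some ⟨k, by omega⟩, by simp⟩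
  choose f hf using hc
  obtain ⟨j, hj⟩ := hl
  refine ⟨f, j, ?_⟩
  funext i
  refine Fin.lastCases ?_ (fun i => ?_) i
  · rw [extFun_last, hj]
  · rw [extFun_castSucc, hf]

/-- the growth map -/
def grow {N : ℕ} (hN : 1 ≤ N) (p : Σ T : LemniscateTree N, {j : Fin N // odeg T.1 j ≤ 1}) :
    LemniscateTree (N + 1) :=
  Subtype.mk (extFun p.1.1 p.2.1) ((isLem_ext hN _ _).2 ⟨p.1.2, p.2.2⟩)

lemma extFun_inj {N : ℕ} {f f' : Fin N → Option (Fin N)} {j j' : Fin N}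
    (h : extFun f j = extFun f' j') : f = f' ∧ j = j' := by
  constructor
  · funext i
    have := congrFun h i.castSucc
    rw [extFun_castSucc, extFun_castSucc] at this
    exact Option.map_injective (Fin.castSucc_injective N) this
  · have := congrFun h (Fin.last N)
    simpa [extFun_last] using this

lemma grow_bij {N : ℕ} (hN : 1 ≤ N) : Function.Bijective (grow hN) := by
  constructor
  · rintro ⟨⟨f, hf⟩, ⟨j, hj⟩⟩ ⟨⟨f', hf'⟩, ⟨j', hj'⟩⟩ h
    have h := congrArg Subtype.val h
    obtain ⟨rfl, rfl⟩ := extFun_inj h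
    rfl
  · rintro ⟨g, hg⟩
    obtain ⟨f, j, rfl⟩ := isLem_exists hN g hg
    have := (isLem_ext hN _ _).1 hg
    exact ⟨⟨Subtype.mk f this.1, ⟨j, this.2⟩⟩, rfl⟩

lemma sum_grow {N : ℕ} (hN : 1 ≤ N) {M : Type*} [AddCommMonoid M]
    (F : LemniscateTree (N + 1) → M) (G : (T : LemniscateTree N) → Fin N → M)
    (h : ∀ T j (hj : odeg T.1 j ≤ 1), F (grow hN ⟨T, ⟨j, hj⟩⟩) = G T j) :
    ∑ T, F T = ∑ T : LemniscateTree N, ∑ j : Fin N, if odeg T.1 j ≤ 1 then G T j else 0 := by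
  rw [← (grow_bij hN).sum_comp F, Fintype.sum_sigma]
  refine Finset.sum_congr rfl fun T _ => ?_
  rw [← Finset.sum_filter, Finset.sum_subtype (p := fun j => odeg T.1 j ≤ 1) _ (by simp)]
  refine Finset.sum_congr rfl fun j _ => ?_
  rw [← h T j.1 j.2]

lemma outdegTwo_eq {N : ℕ} (T : LemniscateTree N) :
    (N : ℝ) - outdegTwoCount T = ∑ j : Fin N, if odeg T.1 j ≤ 1 then (1 : ℝ) else 0 := by
  have h : (outdegTwoCount T : ℝ) = ∑ j : Fin N, if odeg T.1 j = 2 then (1 : ℝ) else 0 := by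
    rw [outdegTwoCount, Finset.card_filter]
    push_cast
    rfl
  have h2 : (N : ℝ) = ∑ j : Fin N, (1 : ℝ) := by simp
  rw [h, h2, ← Finset.sum_sub_distrib]
  refine Finset.sum_congr rfl fun j _ => ?_
  have : odeg T.1 j ≤ 2 := T.2.2.2 j
  interval_cases odeg T.1 j <;> simp

lemma card_succ {N : ℕ} (hN : 1 ≤ N) : (Fintype.card (LemniscateTree (N + 1)) : ℝ) =
    ∑ T : LemniscateTree N, ((N : ℝ) - outdegTwoCount T) := by
  have := sum_grow hN (fun _ => (1 : ℝ)) (fun _ _ => 1) (fun _ _ _ => rfl)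
  simp only [outdegTwo_eq, ← this]
  simp

lemma two_mul_le {N : ℕ} (hN : 1 ≤ N) (T : LemniscateTree N) : 2 * outdegTwoCount T + 1 ≤ N := by
  obtain ⟨M, rfl⟩ : ∃ M, N = M + 1 := ⟨N - 1, by omega⟩
  have h1 : 2 * outdegTwoCount T ≤ ∑ j, odeg T.1 j := by
    have : outdegTwoCount T = ∑ j, if odeg T.1 j = 2 then 1 else 0 := by
      rw [outdegTwoCount, Finset.card_filter]
      rfl
    rw [this, Finset.mul_sum]
    refine Finset.sum_le_sum fun j _ => ?_
    split_ifs <;> omega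
  have h2 : ∑ j, odeg T.1 j ≤ M := by
    unfold odeg
    simp only [Finset.card_filter]
    rw [Finset.sum_comm, Fin.sum_univ_succ]
    have h0 : T.1 0 = none := (T.2.1 0).2 rfl
    have : ∀ i : Fin M, (∑ j, if T.1 i.succ = some j then 1 else 0) ≤ 1 := by
      intro i
      cases T.1 i.succ <;> simp
    calc _ ≤ 0 + ∑ i : Fin M, 1 := by
            refine add_le_add (by simp [h0]) (Finset.sum_le_sum fun i _ => this i)
      _ = M := by simp
  omega

lemma lt_one (T : LemniscateTree 1) : T.1 = fun _ => none := by
  funext i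
  exact (T.2.1 i).2 (by omega)

lemma isLem_one : IsLem (fun _ : Fin 1 => (none : Option (Fin 1))) := by
  refine ⟨?_, ?_, ?_⟩ <;> simp

lemma card_lower (N : ℕ) : ((N + 1).factorial : ℝ) ≤ 2 ^ N * Fintype.card (LemniscateTree (N + 1)) := by
  induction N with
  | zero =>
    have : 0 < Fintype.card (LemniscateTree (0 + 1)) := Fintype.card_pos_iff.2 ⟨Subtype.mk _ isLem_one⟩
    have : (1 : ℝ) ≤ Fintype.card (LemniscateTree (0 + 1)) := by exact_mod_cast this
    simpa using this
  | succ N ih =>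
    have h : ((N + 2 : ℝ) / 2) * Fintype.card (LemniscateTree (N + 1)) ≤
        Fintype.card (LemniscateTree (N + 1 + 1)) := by
      rw [card_succ (N := N + 1) (by omega), mul_comm, ← nsmul_eq_mul, ← Finset.card_univ]
      refine Finset.card_nsmul_le_sum _ _ _ fun T _ => ?_
      have := two_mul_le (by omega) T
      have : (2 * outdegTwoCount T + 1 : ℝ) ≤ (N + 1 : ℕ) := by exact_mod_cast this
      push_cast at this ⊢
      linarith
    rw [Nat.factorial_succ]
    push_cast
    calc _ ≤ (N + 1 + 1 : ℝ) * (2 ^ N * Fintype.card (LemniscateTree (N + 1))) := by gcongr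
      _ = 2 ^ (N + 1) * (((N + 2 : ℝ) / 2) * Fintype.card (LemniscateTree (N + 1))) := by ring
      _ ≤ _ := by gcongr

open Complex in
/-- the half angle -/
noncomputable def sAng (z : ℂ) : ℂ := Real.pi / 4 - z / 2

noncomputable def wt (z : ℂ) : ℕ → ℂ
  | 0 => 1 / (2 * Complex.sin (sAng z) ^ 2)
  | 1 => Complex.cos (sAng z) / Complex.sin (sAng z)
  | 2 => 1
  | _ => 0

lemma hasDerivAt_sAng (z : ℂ) : HasDerivAt sAng (-(1 / 2)) z := by
  unfold sAng
  have := ((hasDerivAt_id z).div_const 2).const_sub (Real.pi / 4 : ℂ)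
  simpa using this

lemma hasDerivAt_wt1 {z : ℂ} (hz : Complex.sin (sAng z) ≠ 0) :
    HasDerivAt (fun z => wt z 1) (wt z 0) z := by
  have h := ((hasDerivAt_sAng z).ccos).div ((hasDerivAt_sAng z).csin) hz
  refine HasDerivAt.congr_deriv (f := fun z => wt z 1) h ?_
  simp only [wt]
  field_simp
  linear_combination (Complex.sin_sq_add_cos_sq (sAng z))

lemma hasDerivAt_wt0 {z : ℂ} (hz : Complex.sin (sAng z) ≠ 0) :
    HasDerivAt (fun z => wt z 0) (wt z 0 * wt z 1) z := by
  have h := (hasDerivAt_const z (1 : ℂ)).div ((((hasDerivAt_sAng z).csin).pow 2).const_mul 2)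
    (by simpa using hz)
  refine HasDerivAt.congr_deriv (f := fun z => wt z 0) h ?_
  simp only [wt]
  simp
  field_simp

lemma hasDerivAt_wt {z : ℂ} (hz : Complex.sin (sAng z) ≠ 0) (d : ℕ) (hd : d ≤ 2) :
    HasDerivAt (fun z => wt z d) (if d ≤ 1 then wt z 0 * wt z (d + 1) else 0) z := by
  interval_cases d
  · simpa using hasDerivAt_wt0 hz
  · have : wt z 2 = 1 := rfl
    simpa [this] using hasDerivAt_wt1 hz
  · simpa [wt] using hasDerivAt_const z (1 : ℂ)

noncomputable def gen (N : ℕ) (z : ℂ) : ℂ :=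
  ∑ T : LemniscateTree N, ∏ j : Fin N, wt z (odeg T.1 j)

lemma gen_succ {N : ℕ} (hN : 1 ≤ N) (z : ℂ) : gen (N + 1) z =
    ∑ T : LemniscateTree N, ∑ j : Fin N, if odeg T.1 j ≤ 1 then
      (∏ i ∈ Finset.univ.erase j, wt z (odeg T.1 i)) * (wt z 0 * wt z (odeg T.1 j + 1)) else 0 := by
  unfold gen
  refine sum_grow hN _ _ fun T j hj => ?_
  change ∏ i, wt z (odeg (extFun T.1 j) i) = _
  rw [Fin.prod_univ_castSucc, odeg_ext_last]
  simp only [odeg_ext_castSucc]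
  rw [← Finset.prod_erase_mul _ _ (Finset.mem_univ j), if_pos rfl]
  rw [Finset.prod_congr rfl (g := fun i => wt z (odeg T.1 i))]
  · ring
  · intro i hi
    rw [if_neg (Finset.ne_of_mem_erase hi).symm, add_zero]

lemma hasDerivAt_gen {N : ℕ} (hN : 1 ≤ N) {z : ℂ} (hz : Complex.sin (sAng z) ≠ 0) :
    HasDerivAt (gen N) (gen (N + 1) z) z := by
  rw [gen_succ hN]
  unfold gen
  refine HasDerivAt.fun_sum (A := fun (T : LemniscateTree N) z => ∏ j : Fin N, wt z (odeg T.1 j))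
    fun T _ => ?_
  have := HasDerivAt.fun_finsetProd (u := Finset.univ) (x := z)
    (f := fun (j : Fin N) z => wt z (odeg T.1 j))
    (fun j _ => hasDerivAt_wt hz (odeg T.1 j) (T.2.2.2 j))
  refine HasDerivAt.congr_deriv this ?_
  refine Finset.sum_congr rfl fun j _ => ?_
  split_ifs <;> simp

lemma gen_one (z : ℂ) : gen 1 z = wt z 0 := by
  unfold gen
  let T0 : LemniscateTree 1 := Subtype.mk _ isLem_one
  rw [Fintype.sum_eq_single T0]
  · simp [T0, odeg]
  · intro T hT
    exact absurd (Subtype.ext ((lt_one T).trans rfl)) hT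

lemma gen_zero_val (N : ℕ) : gen N 0 = Fintype.card (LemniscateTree N) := by
  unfold gen
  have hs : Complex.sin (sAng 0) ^ 2 = 1 / 2 := by
    have : sAng 0 = ((Real.pi / 4 : ℝ) : ℂ) := by simp [sAng]
    rw [this, ← Complex.ofReal_sin, Real.sin_pi_div_four, ← Complex.ofReal_pow]
    rw [div_pow, Real.sq_sqrt (by norm_num)]; norm_num
  have h0 : wt 0 0 = 1 := by simp [wt, hs]
  have h1 : wt 0 1 = 1 := by
    have hc : Complex.cos (sAng 0) = Complex.sin (sAng 0) := by
      have : sAng 0 = ((Real.pi / 4 : ℝ) : ℂ) := by simp [sAng]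
      rw [this, ← Complex.ofReal_sin, ← Complex.ofReal_cos, Real.sin_pi_div_four,
        Real.cos_pi_div_four]
    have : Complex.sin (sAng 0) ≠ 0 := by intro h; rw [h] at hs; norm_num at hs
    simp [wt, hc, this]
  have : ∀ T : LemniscateTree N, ∏ j : Fin N, wt 0 (odeg T.1 j) = 1 := by
    intro T
    refine Finset.prod_eq_one fun j _ => ?_
    have : odeg T.1 j ≤ 2 := T.2.2.2 j
    interval_cases odeg T.1 j
    · exact h0
    · exact h1
    · rfl
  simp [this]

/-- all derivatives of `cot` of the half angle -/
noncomputable def genG (n : ℕ) : ℂ → ℂ := if n = 0 then fun z => wt z 1 else gen n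

lemma hasDerivAt_genG (n : ℕ) {z : ℂ} (hz : Complex.sin (sAng z) ≠ 0) :
    HasDerivAt (genG n) (genG (n + 1) z) z := by
  rcases n with _ | n
  · simp only [genG]
    simpa [gen_one] using hasDerivAt_wt1 hz
  · simpa [genG] using hasDerivAt_gen (N := n + 1) (by omega) hz

lemma iter_formula {U : Set ℂ} (hU : IsOpen U) (G : ℕ → ℂ → ℂ) (h : ℂ → ℂ) (c : ℂ)
    (hG : ∀ n, ∀ z ∈ U, HasDerivAt (G n) (G (n + 1) z) z)
    (hh : ∀ z ∈ U, h z = (c - z) * G 0 z) (n : ℕ) :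
    ∀ z ∈ U, iteratedDeriv (n + 1) h z = (c - z) * G (n + 1) z - (n + 1) * G n z := by
  have key : ∀ n, ∀ z ∈ U, HasDerivAt (fun z => (c - z) * G n z)
      ((c - z) * G (n + 1) z - G n z) z := by
    intro n z hz
    have := ((hasDerivAt_id z).const_sub c).mul (hG n z hz)
    refine HasDerivAt.congr_deriv (f := fun z => (c - z) * G n z) this ?_
    simp; ring
  induction n with
  | zero =>
    intro z hz
    have : h =ᶠ[nhds z] fun z => (c - z) * G 0 z :=
      Filter.eventuallyEq_of_mem (hU.mem_nhds hz) hh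
    rw [iteratedDeriv_succ, iteratedDeriv_zero, this.deriv_eq, (key 0 z hz).deriv]
    simp
  | succ n ih =>
    intro z hz
    have : iteratedDeriv (n + 1) h =ᶠ[nhds z] fun z => (c - z) * G (n + 1) z - (n + 1) * G n z :=
      Filter.eventuallyEq_of_mem (hU.mem_nhds hz) ih
    rw [iteratedDeriv_succ, this.deriv_eq,
      ((key (n + 1) z hz).fun_sub ((hG n z hz).const_mul ((n : ℂ) + 1))).deriv]
    push_cast; ring

noncomputable def hFun (z : ℂ) : ℂ :=
  2 * Complex.cos (sAng z) / dslope Complex.sin 0 (sAng z)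

lemma hFun_eq {z : ℂ} (hz : Complex.sin (sAng z) ≠ 0) :
    hFun z = ((Real.pi / 2 : ℝ) - z) * genG 0 z := by
  have h0 : sAng z ≠ 0 := by intro h; simp [h] at hz
  have h2 : (((Real.pi / 2 : ℝ) : ℂ) - z) = 2 * sAng z := by
    simp [sAng]; ring
  rw [h2]
  simp only [hFun, genG, wt, if_true, dslope_of_ne _ h0, slope_def_field]
  simp
  field_simp

lemma dslope_ne {z : ℂ} (hz : z ∈ Metric.closedBall (0 : ℂ) 3) :
    dslope Complex.sin 0 (sAng z) ≠ 0 := by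
  by_cases h0 : sAng z = 0
  · rw [h0, dslope_same]; simp
  · rw [dslope_of_ne _ h0, slope_def_field]
    simp only [Complex.sin_zero, sub_zero]
    refine div_ne_zero ?_ h0
    intro h
    obtain ⟨k, hk⟩ := Complex.sin_eq_zero_iff.1 h
    have hk0 : k ≠ 0 := by rintro rfl; simp at hk; exact h0 hk
    have h1 : ‖sAng z‖ ≤ Real.pi / 4 + 3 / 2 := by
      unfold sAng
      refine (norm_sub_le _ _).trans ?_
      have : ‖z‖ ≤ 3 := by simpa using hz
      simp [abs_of_pos Real.pi_pos]
      linarith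
    rw [hk, norm_mul, Complex.norm_real, Complex.norm_intCast, Real.norm_of_nonneg Real.pi_pos.le] at h1
    have : (1 : ℝ) ≤ |(k : ℝ)| := by exact_mod_cast Int.one_le_abs hk0
    nlinarith [Real.pi_gt_three]

lemma hFun_diff : DifferentiableOn ℂ hFun (Metric.closedBall (0 : ℂ) 3) := by
  have hd : Differentiable ℂ (dslope Complex.sin 0) := by
    rw [← differentiableOn_univ, Complex.differentiableOn_dslope Filter.univ_mem]
    exact Complex.differentiable_sin.differentiableOn
  have hs : Differentiable ℂ sAng := fun z => (hasDerivAt_sAng z).differentiableAt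
  have h1 : Differentiable ℂ fun z => 2 * Complex.cos (sAng z) := by fun_prop
  have h2 : Differentiable ℂ fun z => dslope Complex.sin 0 (sAng z) := hd.comp hs
  exact h1.differentiableOn.div h2.differentiableOn fun z hz => dslope_ne hz

lemma card_rec_bound : ∃ C : ℝ, 0 < C ∧ ∀ n : ℕ, 1 ≤ n →
    |Real.pi / 2 * Fintype.card (LemniscateTree (n + 1)) -
      (n + 1) * Fintype.card (LemniscateTree n)| ≤ (n + 1).factorial * C / 3 ^ (n + 1) := by
  obtain ⟨C, hC⟩ := (isCompact_sphere (0 : ℂ) 3).exists_bound_of_continuousOn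
    (hFun_diff.continuousOn.mono Metric.sphere_subset_closedBall)
  refine ⟨max C 1, by positivity, fun n hn => ?_⟩
  have hb := Complex.norm_iteratedDeriv_le_of_forall_mem_sphere_norm_le (c := 0) (R := 3)
    (C := max C 1) (f := hFun) (n + 1) (by norm_num)
    (DifferentiableOn.diffContOnCl (hFun_diff.mono Metric.closure_ball_subset_closedBall))
    (fun z hz => (hC z hz).trans (le_max_left _ _))
  have hU : IsOpen {z : ℂ | Complex.sin (sAng z) ≠ 0} := by
    have hs : Differentiable ℂ sAng := fun z => (hasDerivAt_sAng z).differentiableAt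
    exact isOpen_ne_fun (Complex.continuous_sin.comp hs.continuous) continuous_const
  have h0 : Complex.sin (sAng 0) ≠ 0 := by
    have : sAng 0 = ((Real.pi / 4 : ℝ) : ℂ) := by simp [sAng]
    rw [this, ← Complex.ofReal_sin, Real.sin_pi_div_four]
    norm_num
  rw [iter_formula hU genG hFun ((Real.pi / 2 : ℝ) : ℂ) (fun n z hz => hasDerivAt_genG n hz)
    (fun z hz => hFun_eq hz) n 0 h0] at hb
  have e1 : genG (n + 1) 0 = Fintype.card (LemniscateTree (n + 1)) := by
    simp only [genG, if_neg (Nat.succ_ne_zero n), gen_zero_val]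
  have e2 : genG n 0 = Fintype.card (LemniscateTree n) := by
    simp only [genG, if_neg (show n ≠ 0 by omega), gen_zero_val]
  rw [e1, e2, sub_zero] at hb
  rw [← Real.norm_eq_abs, ← Complex.norm_real]
  push_cast at hb ⊢
  exact hb

lemma lemMean_eq {N : ℕ} (hN : 1 ≤ N) (hE : (Fintype.card (LemniscateTree N) : ℝ) ≠ 0) :
    lemMean N = N - Fintype.card (LemniscateTree (N + 1)) / Fintype.card (LemniscateTree N) := by
  rw [card_succ hN, Finset.sum_sub_distrib, lemMean]
  simp
  field_simp
  ring

/-- `μ_N = (1 − 2/π)·N + O(1)`. -/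
theorem mean_outdegTwo_asymptotic :
    ∃ C : ℝ, 0 < C ∧ ∀ N : ℕ, 1 ≤ N →
      |lemMean N - (1 - 2 / Real.pi) * N| ≤ C := by
  obtain ⟨C, hC, hb⟩ := card_rec_bound
  refine ⟨1 + 2 * C, by positivity, fun N hN => ?_⟩
  have hl : (N.factorial : ℝ) ≤ 2 ^ N * Fintype.card (LemniscateTree N) := by
    obtain ⟨M, rfl⟩ : ∃ M, N = M + 1 := ⟨N - 1, by omega⟩
    refine (card_lower M).trans ?_
    gcongr <;> norm_num
  have hb := hb N hN
  have hE : (0 : ℝ) < Fintype.card (LemniscateTree N) := by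
    have : (0 : ℝ) < N.factorial := by exact_mod_cast N.factorial_pos
    by_contra h
    nlinarith [pow_pos (two_pos : (0 : ℝ) < 2) N]
  rw [lemMean_eq hN hE.ne']
  set E := (Fintype.card (LemniscateTree N) : ℝ)
  set E' := (Fintype.card (LemniscateTree (N + 1)) : ℝ)
  have hpi := Real.pi_gt_three
  have hpow : (N + 1 : ℝ) * 2 ^ N ≤ 2 * 3 ^ N := by
    have := one_add_mul_le_pow (a := (1 / 2 : ℝ)) (by norm_num) N
    have h3 : (3 : ℝ) ^ N = (1 + 1 / 2) ^ N * 2 ^ N := by rw [← mul_pow]; norm_num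
    rw [h3]
    nlinarith [pow_pos (two_pos : (0 : ℝ) < 2) N]
  have hb2 : ((N + 1).factorial : ℝ) * C / 3 ^ (N + 1) ≤ 2 * C * E := by
    rw [div_le_iff₀ (by positivity), Nat.factorial_succ]
    push_cast
    calc ((N : ℝ) + 1) * N.factorial * C ≤ (N + 1) * (2 ^ N * E) * C := by gcongr
      _ = ((N + 1) * 2 ^ N) * (E * C) := by ring
      _ ≤ (2 * 3 ^ N) * (E * C) := by gcongr
      _ ≤ 2 * C * E * 3 ^ (N + 1) := by
        rw [pow_succ]
        have : 0 < 3 ^ N * (E * C) := by positivity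
        nlinarith
  have hb3 := hb.trans hb2
  have e : (N : ℝ) - E' / E - (1 - 2 / Real.pi) * N =
      -(2 / Real.pi) * ((Real.pi / 2 * E' - (N + 1) * E) / E + 1) := by
    field_simp
    ring
  rw [e, abs_mul, abs_neg, abs_of_pos (by positivity)]
  have h1 : |(Real.pi / 2 * E' - (N + 1) * E) / E| ≤ 2 * C := by
    rw [abs_div, abs_of_pos hE, div_le_iff₀ hE]; exact hb3
  have h2 : |(Real.pi / 2 * E' - (N + 1) * E) / E + 1| ≤ 1 + 2 * C := by
    refine (abs_add_le _ _).trans ?_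
    rw [abs_one]; linarith
  have h3 : 2 / Real.pi ≤ 1 := by rw [div_le_one (by positivity)]; linarith
  calc _ ≤ 1 * (1 + 2 * C) := by gcongr
    _ = _ := one_mul _
end

section
/- Let σ_N² denote the variance of the number of vertices of outdegree two in a lemniscate tree sampled uniformly at random from LT_N. Then σ_N² = (4/π² + 2/π − 1)·N + O(1); that is, there exists a constant C > 0 such that |σ_N² − (4/π² + 2/π − 1)·N| ≤ C for all N ≥ 1. -/
/-- `σ_N²`: the variance of the number of outdegree-two vertices of a uniformly
random lemniscate tree on `N` vertices. -/
noncomputable def lemVar (N : ℕ) : ℝ :=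
  (∑ T : LemniscateTree N, ((outdegTwoCount T : ℝ) - lemMean N) ^ 2) /
    (Fintype.card (LemniscateTree N))


namespace Lem

/-- outdegree -/
def od {N : ℕ} (T : LemniscateTree N) (j : Fin N) : ℕ :=
  (Finset.univ.filter fun i => T.1 i = some j).card

lemma od_le {N : ℕ} (T : LemniscateTree N) (j : Fin N) : od T j ≤ 2 := T.2.2.2 j

/-- extension of a parent function by a new last vertex with parent `j` -/
def extFun {N : ℕ} (f : Fin N → Option (Fin N)) (j : Fin N) :
    Fin (N+1) → Option (Fin (N+1)) :=
  Fin.snoc (α := fun _ => Option (Fin (N+1))) (fun i => (f i).map Fin.castSucc) (some j.castSucc)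

lemma extFun_castSucc {N : ℕ} (f : Fin N → Option (Fin N)) (j : Fin N) (i : Fin N) :
    extFun f j i.castSucc = (f i).map Fin.castSucc := by
  simp [extFun]

lemma extFun_last {N : ℕ} (f : Fin N → Option (Fin N)) (j : Fin N) :
    extFun f j (Fin.last N) = some j.castSucc := by
  simp [extFun]

lemma map_castSucc_eq {N : ℕ} (o : Option (Fin N)) (k : Fin N) :
    o.map Fin.castSucc = some k.castSucc ↔ o = some k := by
  cases o <;> simp

lemma map_castSucc_ne {N : ℕ} (o : Option (Fin N)) :
    o.map Fin.castSucc ≠ some (Fin.last N) := by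
  cases o with
  | none => simp
  | some a => simp

lemma card_ext {N : ℕ} (f : Fin N → Option (Fin N)) (j k : Fin N) :
    (Finset.univ.filter fun i => extFun f j i = some k.castSucc).card =
      (Finset.univ.filter fun i => f i = some k).card + if j = k then 1 else 0 := by
  rw [Finset.card_filter, Fin.sum_univ_castSucc, Finset.card_filter]
  simp only [extFun_castSucc, extFun_last, map_castSucc_eq]
  simp

lemma card_ext_last {N : ℕ} (f : Fin N → Option (Fin N)) (j : Fin N) :
    (Finset.univ.filter fun i => extFun f j i = some (Fin.last N)).card = 0 := by
  rw [Finset.card_filter, Fin.sum_univ_castSucc]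
  simp only [extFun_castSucc, extFun_last, map_castSucc_ne]
  simp

/-- extension of trees -/
def ext {N : ℕ} (p : Σ T : LemniscateTree N, {j : Fin N // od T j ≤ 1}) :
    LemniscateTree (N+1) :=
  ⟨extFun p.1.1 p.2.1, by
    obtain ⟨⟨f, h1, h2, h3⟩, j, hj⟩ := p
    have hN : 0 < N := j.pos
    refine ⟨?_, ?_, ?_⟩
    · intro i
      induction i using Fin.lastCases with
      | last => simp [extFun_last]; omega
      | cast i => simp [extFun_castSucc, h1]
    · intro i k
      induction i using Fin.lastCases with
      | last =>
        simp only [extFun_last, Option.some.injEq]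
        rintro rfl
        simp
      | cast i =>
        simp only [extFun_castSucc, Option.map_eq_some_iff]
        rintro ⟨a, ha, rfl⟩
        simpa using h2 i a ha
    · intro k
      induction k using Fin.lastCases with
      | last => simp only [card_ext_last]; omega
      | cast k =>
        simp only [card_ext]
        have := h3 k
        simp only [od] at hj
        split_ifs with h
        · subst h; omega
        · omega⟩

lemma ext_injective {N : ℕ} : Function.Injective (ext (N := N)) := by
  rintro ⟨⟨f, hf⟩, j, hj⟩ ⟨⟨g, hg⟩, k, hk⟩ h
  have h' : extFun f j = extFun g k := congrArg Subtype.val h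
  have e1 : j = k := by
    have := congrFun h' (Fin.last N)
    simpa [extFun_last] using this
  have e2 : f = g := by
    funext i
    have := congrFun h' i.castSucc
    rw [extFun_castSucc, extFun_castSucc] at this
    exact Option.map_injective (Fin.castSucc_injective N) this
  subst e1 e2
  rfl

lemma ext_surjective {N : ℕ} (hN : 1 ≤ N) : Function.Surjective (ext (N := N)) := by
  rintro ⟨F, h1, h2, h3⟩
  have hr : ∀ i : Fin N, ∃ o : Option (Fin N), F i.castSucc = o.map Fin.castSucc := by
    intro i
    rcases h : F i.castSucc with _ | a
    · exact ⟨none, rfl⟩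
    · have := h2 _ _ h
      simp at this
      exact ⟨some ⟨a, by omega⟩, by simp⟩
  choose f hf using hr
  have hl : ∃ j : Fin N, F (Fin.last N) = some j.castSucc := by
    rcases h : F (Fin.last N) with _ | a
    · have := (h1 _).1 h
      simp at this; omega
    · have := h2 _ _ h
      simp at this
      exact ⟨⟨a, this⟩, by simp⟩
  obtain ⟨j, hj⟩ := hl
  have hF : F = extFun f j := by
    funext i
    induction i using Fin.lastCases with
    | last => rw [extFun_last, hj]
    | cast i => rw [extFun_castSucc, hf]
  subst hF
  refine ⟨⟨⟨f, ?_, ?_, ?_⟩, j, ?_⟩, ?_⟩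
  · intro i
    have := h1 i.castSucc
    simpa [extFun_castSucc] using this
  · intro i k hik
    have := h2 i.castSucc k.castSucc (by simp [extFun_castSucc, hik])
    simpa using this
  · intro k
    have := h3 k.castSucc
    rw [card_ext] at this
    omega
  · have := h3 j.castSucc
    rw [card_ext] at this
    simp only [od]
    simp at this
    omega
  · rfl

lemma X_ext {N : ℕ} (T : LemniscateTree N) (j : Fin N) (hj : od T j ≤ 1) :
    outdegTwoCount (ext ⟨T, j, hj⟩) = outdegTwoCount T + if od T j = 1 then 1 else 0 := by
  have key : ∀ k : Fin N, ((if od T k + (if j = k then 1 else 0) = 2 then 1 else 0 : ℕ)) =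
      (if od T k = 2 then 1 else 0) + if j = k then (if od T j = 1 then 1 else 0) else 0 := by
    intro k
    by_cases h : j = k
    · subst h
      simp only [if_true]
      split_ifs <;> omega
    · simp [h]
  have : outdegTwoCount (ext ⟨T, j, hj⟩) =
      ∑ k : Fin N, (if od T k + (if j = k then 1 else 0) = 2 then 1 else 0 : ℕ) := by
    unfold outdegTwoCount
    rw [Finset.card_filter, Fin.sum_univ_castSucc]
    have e : (ext ⟨T, j, hj⟩).1 = extFun T.1 j := rfl
    rw [e]
    simp only [card_ext, card_ext_last]
    rfl
  rw [this, Finset.sum_congr rfl (fun k _ => key k), Finset.sum_add_distrib]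
  rw [Finset.sum_ite_eq, if_pos (Finset.mem_univ _), ← Finset.card_filter]
  rfl

/-- number of vertices with given outdegree -/
def cnt {N : ℕ} (T : LemniscateTree N) (d : ℕ) : ℕ := (Finset.univ.filter fun j => od T j = d).card

lemma cnt_two {N : ℕ} (T : LemniscateTree N) : cnt T 2 = outdegTwoCount T := rfl

lemma cnt_sum {N : ℕ} (T : LemniscateTree N) : cnt T 0 + cnt T 1 + cnt T 2 = N := by
  simp only [cnt, Finset.card_filter]
  rw [← Finset.sum_add_distrib, ← Finset.sum_add_distrib]
  have : ∀ j : Fin N, ((if od T j = 0 then 1 else 0) + (if od T j = 1 then 1 else 0) +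
      (if od T j = 2 then 1 else 0) : ℕ) = 1 := by
    intro j
    have := od_le T j
    split_ifs <;> omega
  rw [Finset.sum_congr rfl (fun j _ => this j)]
  simp

lemma cnt_edges {N : ℕ} (hN : 1 ≤ N) (T : LemniscateTree N) : cnt T 1 + 2 * cnt T 2 + 1 = N := by
  have h1 : cnt T 1 + 2 * cnt T 2 = ∑ j, od T j := by
    simp only [cnt, Finset.card_filter]
    rw [Finset.mul_sum, ← Finset.sum_add_distrib]
    refine Finset.sum_congr rfl fun j _ => ?_
    have := od_le T j
    split_ifs <;> omega
  have h2 : ∑ j, od T j = ∑ i : Fin N, if (i : ℕ) = 0 then 0 else 1 := by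
    simp only [od, Finset.card_filter]
    rw [Finset.sum_comm]
    refine Finset.sum_congr rfl fun i _ => ?_
    rcases h : T.1 i with _ | a
    · have := (T.2.1 i).1 h
      simp [this]
    · have : (i : ℕ) ≠ 0 := fun h0 => by
        have := (T.2.1 i).2 h0
        simp [this] at h
      simp [this]
  obtain ⟨M, rfl⟩ : ∃ M, N = M + 1 := ⟨N - 1, by omega⟩
  rw [h1, h2, Fin.sum_univ_succ]
  simp

lemma cnt_one {N : ℕ} (hN : 1 ≤ N) (T : LemniscateTree N) :
    cnt T 1 = N - 1 - 2 * outdegTwoCount T := by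
  have := cnt_edges hN T
  rw [cnt_two] at this; omega

lemma cnt_le {N : ℕ} (hN : 1 ≤ N) (T : LemniscateTree N) :
    2 * outdegTwoCount T + 1 ≤ N := by
  have := cnt_edges hN T
  rw [cnt_two] at this; omega

lemma cnt_zero {N : ℕ} (hN : 1 ≤ N) (T : LemniscateTree N) :
    cnt T 0 = outdegTwoCount T + 1 := by
  have := cnt_edges hN T
  have := cnt_sum T
  simp only [cnt_two] at *; omega

/-- the fundamental recurrence -/
lemma sum_succ {R : Type*} [CommRing R] {N : ℕ} (hN : 1 ≤ N) (φ : ℕ → R) :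
    ∑ T : LemniscateTree (N+1), φ (outdegTwoCount T) =
      ∑ T : LemniscateTree N, (((outdegTwoCount T : R) + 1) * φ (outdegTwoCount T) +
        ((N : R) - 1 - 2 * outdegTwoCount T) * φ (outdegTwoCount T + 1)) := by
  rw [← Function.Bijective.sum_comp ⟨ext_injective, ext_surjective hN⟩]
  rw [Fintype.sum_sigma]
  refine Finset.sum_congr rfl fun T _ => ?_
  have h0 : ((cnt T 0 : ℕ) : R) = (outdegTwoCount T : R) + 1 := by
    rw [cnt_zero hN T]; push_cast; rfl
  have h1 : ((cnt T 1 : ℕ) : R) = (N : R) - 1 - 2 * outdegTwoCount T := by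
    have := congrArg (Nat.cast (R := R)) (cnt_edges hN T)
    rw [cnt_two] at this
    push_cast at this
    rw [← this]; ring
  rw [← h0, ← h1]
  have e : ∀ x : {j : Fin N // od T j ≤ 1}, φ (outdegTwoCount (ext ⟨T, x⟩)) =
      (fun j : Fin N => φ (outdegTwoCount T + if od T j = 1 then 1 else 0)) x := by
    rintro ⟨j, hj⟩
    rw [X_ext]
  rw [Finset.sum_congr rfl (fun x _ => e x),
    ← Finset.sum_subtype (p := fun j => od T j ≤ 1)
      (Finset.univ.filter fun j => od T j ≤ 1) (by simp)
      (fun j : Fin N => φ (outdegTwoCount T + if od T j = 1 then 1 else 0)), Finset.sum_filter]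
  simp only [cnt, Finset.card_filter]
  push_cast
  rw [Finset.sum_mul, Finset.sum_mul, ← Finset.sum_add_distrib]
  refine Finset.sum_congr rfl fun j _ => ?_
  rcases h : od T j with _ | _ | k <;> simp

end Lem

namespace Lem

open Complex in
/-- sine factor -/
noncomputable def Sn (z : ℂ) : ℂ := Complex.sin ((Real.pi / 2 - z) / 2)
/-- cosine factor -/
noncomputable def Cs (z : ℂ) : ℂ := Complex.cos ((Real.pi / 2 - z) / 2)
/-- the generating function -/
noncomputable def oo (z : ℂ) : ℂ := Cs z / Sn z
/-- its derivative -/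
noncomputable def ll (z : ℂ) : ℂ := 1 / (2 * Sn z ^ 2)

lemma hasDerivAt_arg (z : ℂ) :
    HasDerivAt (fun z : ℂ => ((Real.pi / 2 - z) / 2 : ℂ)) (-1/2) z := by
  simpa using ((hasDerivAt_id z).const_sub (Real.pi / 2 : ℂ)).div_const 2

lemma hasDerivAt_Sn (z : ℂ) : HasDerivAt Sn (-Cs z / 2) z := by
  have := (Complex.hasDerivAt_sin ((Real.pi / 2 - z) / 2)).comp z (hasDerivAt_arg z)
  refine this.congr_deriv ?_
  simp only [Cs]; ring

lemma hasDerivAt_Cs (z : ℂ) : HasDerivAt Cs (Sn z / 2) z := by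
  have := (Complex.hasDerivAt_cos ((Real.pi / 2 - z) / 2)).comp z (hasDerivAt_arg z)
  refine this.congr_deriv ?_
  simp only [Sn]; ring

lemma sq_add_sq (z : ℂ) : Sn z ^ 2 + Cs z ^ 2 = 1 := Complex.sin_sq_add_cos_sq _

lemma hasDerivAt_oo {z : ℂ} (hz : Sn z ≠ 0) : HasDerivAt oo (ll z) z := by
  refine ((hasDerivAt_Cs z).div (hasDerivAt_Sn z) hz).congr_deriv ?_
  have := sq_add_sq z
  simp only [ll]
  field_simp
  linear_combination this

lemma hasDerivAt_ll {z : ℂ} (hz : Sn z ≠ 0) : HasDerivAt ll (oo z * ll z) z := by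
  have h := (((hasDerivAt_Sn z).pow 2).const_mul 2)
  have h2 := (hasDerivAt_const z (1:ℂ)).div h (by simp [hz])
  refine h2.congr_deriv ?_
  simp only [ll, oo, Pi.pow_apply]
  field_simp
  ring

lemma Sn_zero_sq : Sn 0 ^ 2 = 1 / 2 := by
  have h : Complex.cos (2 * (((Real.pi : ℂ) / 2 - 0) / 2)) = 0 := by
    rw [show (2 * (((Real.pi : ℂ) / 2 - 0) / 2)) = (Real.pi : ℂ) / 2 by ring]
    exact Complex.cos_pi_div_two
  rw [Complex.cos_two_mul] at h
  have h2 := sq_add_sq 0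
  simp only [Cs] at h2
  linear_combination h2 - h / 2

lemma Sn_zero_ne : Sn 0 ≠ 0 := by
  intro h
  have := Sn_zero_sq
  rw [h] at this
  norm_num at this

lemma Cs_zero : Cs 0 = Sn 0 := by
  have : Cs 0 = Complex.cos ((Real.pi : ℂ) / 2 - ((Real.pi : ℂ) / 2 - 0) / 2) := by
    simp only [Cs]; congr 1; ring
  rw [this, Complex.cos_pi_div_two_sub]; rfl

lemma oo_zero : oo 0 = 1 := by
  rw [oo, Cs_zero, div_self Sn_zero_ne]

lemma ll_zero : ll 0 = 1 := by
  rw [ll, Sn_zero_sq]; norm_num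

lemma isOpen_U : IsOpen {z : ℂ | Sn z ≠ 0} := by
  have : Continuous Sn := continuous_iff_continuousAt.2 fun z => (hasDerivAt_Sn z).continuousAt
  exact isOpen_ne_fun this continuous_const

lemma X_one (T : LemniscateTree 1) : outdegTwoCount T = 0 := by
  have := cnt_le le_rfl T
  omega

lemma card_one : Fintype.card (LemniscateTree 1) = 1 := by
  rw [Fintype.card_eq_one_iff]
  refine ⟨⟨fun _ => none, ?_, ?_, ?_⟩, ?_⟩
  · intro i; simp
  · intro i j h; simp at h
  · intro j; simp
  · rintro ⟨f, h1, h2⟩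
    apply Subtype.ext
    funext i
    exact (h1 i).2 (by simp)

lemma iteratedDeriv_oo (N : ℕ) : ∀ z, Sn z ≠ 0 → iteratedDeriv (N+1) oo z =
    ∑ T : LemniscateTree (N+1), ll z ^ (outdegTwoCount T + 1) * oo z ^ (N - 2 * outdegTwoCount T) := by
  induction N with
  | zero =>
    intro z hz
    simp only [X_one]
    simp [card_one, (hasDerivAt_oo hz).deriv]
  | succ N ih =>
    intro z hz
    rw [iteratedDeriv_succ]
    have he : iteratedDeriv (N+1) oo =ᶠ[nhds z] fun z => ∑ T : LemniscateTree (N+1),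
        ll z ^ (outdegTwoCount T + 1) * oo z ^ (N - 2 * outdegTwoCount T) := by
      filter_upwards [isOpen_U.mem_nhds hz] with w hw using ih w hw
    rw [he.deriv_eq]
    have hd := HasDerivAt.fun_sum (u := Finset.univ) (fun (T : LemniscateTree (N+1)) _ =>
      ((hasDerivAt_ll hz).pow (outdegTwoCount T + 1)).mul
        ((hasDerivAt_oo hz).pow (N - 2 * outdegTwoCount T)))
    refine hd.deriv.trans ?_
    rw [sum_succ (by omega) (fun k => ll z ^ (k + 1) * oo z ^ (N + 1 - 2 * k))]
    refine Finset.sum_congr rfl fun T _ => ?_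
    have hT := cnt_le (by omega) T
    generalize outdegTwoCount T = k at *
    obtain ⟨m, rfl⟩ : ∃ m, N = 2 * k + m := ⟨N - 2 * k, by omega⟩
    rw [show 2 * k + m - 2 * k = m by omega, show 2 * k + m + 1 - 2 * k = m + 1 by omega]
    rcases m with _ | m
    · simp only [Pi.pow_apply]; push_cast; simp; ring
    · rw [show 2 * k + (m+1) + 1 - 2 * (k+1) = m by omega]
      simp only [Pi.pow_apply]; push_cast; simp; ring

lemma iteratedDeriv_oo_zero (N : ℕ) (hN : 1 ≤ N) :
    iteratedDeriv N oo 0 = (Fintype.card (LemniscateTree N) : ℂ) := by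
  obtain ⟨M, rfl⟩ : ∃ M, N = M + 1 := ⟨N - 1, by omega⟩
  rw [iteratedDeriv_oo M 0 Sn_zero_ne]
  simp [oo_zero, ll_zero]

/-- the pole -/
noncomputable def aa : ℂ := (Real.pi : ℂ) / 2

lemma Sn_aa : Sn aa = 0 := by simp [Sn, aa]
lemma Cs_aa : Cs aa = 1 := by simp [Cs, aa]

lemma norm_aa : ‖aa‖ = Real.pi / 2 := by
  simp [aa, abs_of_pos Real.pi_pos]

lemma aa_mem : aa ∈ Metric.ball (0:ℂ) 4 := by
  have := Real.pi_lt_four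
  simp only [Metric.mem_ball, dist_zero_right, norm_aa]; linarith

lemma aa_ne : aa ≠ 0 := by
  rw [← norm_pos_iff, norm_aa]; have := Real.pi_pos; positivity

lemma Sn_ne {z : ℂ} (hz : z ∈ Metric.ball (0:ℂ) 4) (hza : z ≠ aa) : Sn z ≠ 0 := by
  intro h
  obtain ⟨k, hk⟩ := Complex.sin_eq_zero_iff.1 h
  have e : z = ((Real.pi * (1/2 - 2 * k) : ℝ) : ℂ) := by
    push_cast
    linear_combination -2 * hk
  have hk0 : k ≠ 0 := by
    rintro rfl
    apply hza
    rw [e, aa]; push_cast; ring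
  rw [Metric.mem_ball, dist_zero_right, e, Complex.norm_real, Real.norm_eq_abs, abs_mul,
    abs_of_pos Real.pi_pos] at hz
  have h3 := Real.pi_gt_three
  have : (3/2 : ℝ) ≤ |1/2 - 2 * (k:ℝ)| := by
    rcases lt_or_gt_of_ne hk0 with h | h
    · have : (k:ℝ) ≤ -1 := by exact_mod_cast (by omega : k ≤ -1)
      rw [abs_of_pos (by linarith)]; linarith
    · have : (1:ℝ) ≤ k := by exact_mod_cast (by omega : 1 ≤ k)
      rw [abs_of_neg (by linarith)]; linarith
  nlinarith

/-- quotient of `Sn` by the linear factor -/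
noncomputable def DD : ℂ → ℂ := dslope Sn aa

lemma DD_diff : Differentiable ℂ DD := by
  rw [← differentiableOn_univ]
  exact (Complex.differentiableOn_dslope Filter.univ_mem).2
    (fun z _ => (hasDerivAt_Sn z).differentiableAt.differentiableWithinAt)

lemma Sn_eq (z : ℂ) : Sn z = (z - aa) * DD z := by
  have := sub_smul_dslope Sn aa z
  rw [Sn_aa] at this
  simpa [DD] using this.symm

lemma DD_aa : DD aa = -1/2 := by
  rw [DD, dslope_same, (hasDerivAt_Sn aa).deriv, Cs_aa]

lemma DD_ne {z : ℂ} (hz : z ∈ Metric.ball (0:ℂ) 4) : DD z ≠ 0 := by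
  by_cases h : z = aa
  · rw [h, DD_aa]; norm_num
  · intro h0
    apply Sn_ne hz h
    rw [Sn_eq, h0, mul_zero]

/-- regular numerator -/
noncomputable def hh (z : ℂ) : ℂ := Cs z / DD z
/-- regular part -/
noncomputable def gg : ℂ → ℂ := dslope hh aa

lemma hh_diff : DifferentiableOn ℂ hh (Metric.ball 0 4) := fun z hz =>
  ((hasDerivAt_Cs z).differentiableAt.div (DD_diff z) (DD_ne hz)).differentiableWithinAt

lemma gg_diff : DifferentiableOn ℂ gg (Metric.ball 0 4) :=
  (Complex.differentiableOn_dslope (Metric.isOpen_ball.mem_nhds aa_mem)).2 hh_diff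

lemma hh_aa : hh aa = -2 := by rw [hh, Cs_aa, DD_aa]; norm_num

lemma oo_eq {z : ℂ} (hza : z ≠ aa) :
    oo z = (-2) * (1 * z - aa)⁻¹ + gg z := by
  have h := sub_smul_dslope hh aa z
  rw [hh_aa] at h
  have hs : z - aa ≠ 0 := sub_ne_zero.2 hza
  have h2 : oo z = hh z / (z - aa) := by
    rw [oo, hh, Sn_eq, div_div, mul_comm]
  rw [h2, one_mul]
  field_simp
  simp only [smul_eq_mul] at h
  rw [gg]
  linear_combination -h

lemma iteratedDeriv_split (N : ℕ) :
    iteratedDeriv N oo 0 = 2 * (N.factorial : ℂ) / aa ^ (N+1) + iteratedDeriv N gg 0 := by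
  have he : oo =ᶠ[nhds 0] (fun z => (-2) * (1 * z - aa)⁻¹) + gg := by
    filter_upwards [isOpen_ne.mem_nhds (Ne.symm aa_ne)] with z hz
    exact oo_eq hz
  have hg : ContDiffAt ℂ N gg 0 :=
    (gg_diff.analyticAt (Metric.isOpen_ball.mem_nhds (by simp))).contDiffAt
  have hp : ContDiffAt ℂ N (fun z : ℂ => (1 * z - aa)⁻¹) 0 := by
    refine ContDiffAt.inv (by fun_prop) ?_
    simpa using aa_ne
  rw [he.iteratedDeriv_eq, iteratedDeriv_add (contDiffAt_const.mul hp) hg,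
    iteratedDeriv_const_mul _ hp, iteratedDeriv_eq_iterate, iter_deriv_inv_linear_sub]
  congr 1
  simp only [one_pow, mul_one, mul_zero, zero_sub]
  rw [show (-1 - (N:ℤ)) = -((N+1 : ℕ) : ℤ) by push_cast; ring, zpow_neg, zpow_natCast, neg_pow aa,
    mul_inv]
  have h1 : ((-1:ℂ)^(N+1))⁻¹ = (-1)^(N+1) := by
    rw [← inv_pow]; norm_num
  have h2 : (-1:ℂ)^N * (-1)^N = 1 := by rw [← mul_pow]; norm_num
  rw [h1, pow_succ (-1:ℂ)]
  linear_combination (2 * (N.factorial : ℂ) * (aa^(N+1))⁻¹) * h2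

lemma card_asymp : ∃ M : ℝ, ∀ N : ℕ, 1 ≤ N →
    |(Fintype.card (LemniscateTree N) : ℝ) - 2 * N.factorial / (Real.pi / 2) ^ (N+1)| ≤
      N.factorial * M / 3 ^ N := by
  have hsub : Metric.closedBall (0:ℂ) 3 ⊆ Metric.ball 0 4 :=
    Metric.closedBall_subset_ball (by norm_num)
  obtain ⟨M, hM⟩ := (isCompact_closedBall (0:ℂ) 3).exists_bound_of_continuousOn
    (gg_diff.continuousOn.mono hsub)
  refine ⟨M, fun N hN => ?_⟩
  have := Complex.norm_iteratedDeriv_le_of_forall_mem_sphere_norm_le (f := gg) (c := 0) (R := 3)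
    (C := M) N (by norm_num)
    (DifferentiableOn.diffContOnCl_ball (gg_diff) hsub)
    (fun z hz => hM z (Metric.sphere_subset_closedBall hz))
  refine le_trans (le_of_eq ?_) this
  have e := iteratedDeriv_split N
  rw [iteratedDeriv_oo_zero N hN] at e
  rw [← Real.norm_eq_abs, ← Complex.norm_real]
  congr 1
  push_cast
  rw [e, aa]; ring

end Lem

namespace Lem

open Filter Topology

/-- number of trees -/
noncomputable def EE (N : ℕ) : ℝ := Fintype.card (LemniscateTree N)

lemma EE_succ {N : ℕ} (hN : 1 ≤ N) :
    EE (N+1) = N * EE N - ∑ T : LemniscateTree N, (outdegTwoCount T : ℝ) := by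
  have h := sum_succ (R := ℝ) hN (fun _ => 1)
  have e : EE (N+1) = ∑ T : LemniscateTree (N+1), (1:ℝ) := by simp [EE]
  have e2 : (N:ℝ) * EE N = ∑ T : LemniscateTree N, (N:ℝ) := by simp [EE, mul_comm]
  rw [e, h, e2, ← Finset.sum_sub_distrib]
  exact Finset.sum_congr rfl fun T _ => by ring

lemma M_succ {N : ℕ} (hN : 1 ≤ N) :
    ∑ T : LemniscateTree (N+1), (outdegTwoCount T : ℝ) =
      (N - 1) * EE N + (N - 2) * ∑ T : LemniscateTree N, (outdegTwoCount T : ℝ)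
        - ∑ T : LemniscateTree N, (outdegTwoCount T : ℝ) ^ 2 := by
  have h := sum_succ (R := ℝ) hN (fun k => (k:ℝ))
  have e2 : ((N:ℝ) - 1) * EE N = ∑ T : LemniscateTree N, ((N:ℝ) - 1) := by
    simp [EE]; ring
  rw [h, e2, Finset.mul_sum, ← Finset.sum_add_distrib, ← Finset.sum_sub_distrib]
  exact Finset.sum_congr rfl fun T _ => by push_cast; ring

lemma EE_pos (N : ℕ) : 0 < EE (N+1) := by
  induction N with
  | zero => simp [EE, card_one]
  | succ N ih =>
    refine lt_of_lt_of_le ih ?_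
    rw [EE_succ (by omega : 1 ≤ N+1)]
    have h : ∑ T : LemniscateTree (N+1), (outdegTwoCount T : ℝ) ≤
        ∑ T : LemniscateTree (N+1), (N:ℝ) := by
      refine Finset.sum_le_sum fun T _ => ?_
      have := cnt_le (by omega) T
      exact_mod_cast (by omega : outdegTwoCount T ≤ N)
    have e2 : ∑ T : LemniscateTree (N+1), (N:ℝ) = N * EE (N+1) := by simp [EE, mul_comm]
    push_cast
    rw [e2] at h
    linarith

lemma var_eq {N : ℕ} (hN : 1 ≤ N) :
    lemVar N = -N - 1 + EE (N+1) / EE N + EE (N+2) / EE N - (EE (N+1) / EE N) ^ 2 := by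
  have hpos : 0 < EE N := by
    obtain ⟨M, rfl⟩ : ∃ M, N = M + 1 := ⟨N - 1, by omega⟩
    exact EE_pos M
  have h1 := EE_succ hN
  have h2 := EE_succ (by omega : 1 ≤ N + 1)
  rw [M_succ hN] at h2
  have hv : lemVar N = (∑ T : LemniscateTree N, (outdegTwoCount T : ℝ) ^ 2) / EE N -
      ((∑ T : LemniscateTree N, (outdegTwoCount T : ℝ)) / EE N) ^ 2 := by
    have hm : lemMean N = (∑ T : LemniscateTree N, (outdegTwoCount T : ℝ)) / EE N := rfl
    have : lemVar N = (∑ T : LemniscateTree N, ((outdegTwoCount T : ℝ) - lemMean N) ^ 2) / EE N :=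
      rfl
    rw [this]
    have e : ∑ T : LemniscateTree N, ((outdegTwoCount T : ℝ) - lemMean N) ^ 2 =
        (∑ T : LemniscateTree N, (outdegTwoCount T : ℝ) ^ 2)
        - 2 * lemMean N * (∑ T : LemniscateTree N, (outdegTwoCount T : ℝ))
        + lemMean N ^ 2 * EE N := by
      have e3 : lemMean N ^ 2 * EE N = ∑ T : LemniscateTree N, lemMean N ^ 2 := by
        simp [EE, mul_comm]
      rw [e3, Finset.mul_sum, ← Finset.sum_sub_distrib, ← Finset.sum_add_distrib]
      exact Finset.sum_congr rfl fun T _ => by ring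
    rw [e, hm]
    field_simp
    ring
  rw [hv]
  generalize (∑ T : LemniscateTree N, (outdegTwoCount T : ℝ) ^ 2) = A at *
  generalize (∑ T : LemniscateTree N, (outdegTwoCount T : ℝ)) = B at *
  push_cast at h2
  rw [show N + 1 + 1 = N + 2 from rfl] at h2
  rw [h2, h1]
  field_simp
  ring

/-- normalised counts -/
noncomputable def yy (N : ℕ) : ℝ := EE N * (Real.pi / 2) ^ (N+1) / N.factorial

lemma yy_bound : ∃ K : ℝ, 0 ≤ K ∧ ∀ N : ℕ, 1 ≤ N → |yy N - 2| ≤ K * (Real.pi / 6) ^ N := by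
  obtain ⟨M, hM⟩ := card_asymp
  have hp := Real.pi_pos
  refine ⟨|M| * (Real.pi / 2), by positivity, fun N hN => ?_⟩
  have h := hM N hN
  have hf : (0:ℝ) < N.factorial := by exact_mod_cast N.factorial_pos
  have hb : 0 < (Real.pi / 2) ^ (N+1) := by positivity
  have e : yy N - 2 = ((Fintype.card (LemniscateTree N) : ℝ) -
      2 * N.factorial / (Real.pi / 2) ^ (N+1)) * ((Real.pi / 2) ^ (N+1) / N.factorial) := by
    rw [yy, EE]; field_simp
  rw [e, abs_mul, abs_of_pos (div_pos hb hf)]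
  calc _ ≤ (N.factorial * M / 3 ^ N) * ((Real.pi / 2) ^ (N+1) / N.factorial) := by gcongr
    _ = M * (Real.pi / 2) * (Real.pi / 6) ^ N := by
      rw [show Real.pi / 6 = (Real.pi / 2) / 3 by ring, div_pow (Real.pi/2) 3 N]
      field_simp
      ring
    _ ≤ _ := by gcongr; exact le_abs_self M

lemma geo : Tendsto (fun N : ℕ => ((N:ℝ) + 2) ^ 2 * (Real.pi / 6) ^ N) atTop (𝓝 0) := by
  have hp := Real.pi_pos
  have h4 := Real.pi_lt_four
  have h := tendsto_pow_const_mul_const_pow_of_lt_one 2 (r := Real.pi / 6) (by positivity)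
    (by linarith)
  have h2 := (h.comp (tendsto_add_atTop_nat 2)).div_const ((Real.pi / 6) ^ 2)
  rw [zero_div] at h2
  refine h2.congr fun N => ?_
  simp only [Function.comp]
  push_cast
  field_simp
  ring

lemma pi6_le (N i : ℕ) : (Real.pi / 6) ^ (N + i) ≤ (Real.pi / 6) ^ N := by
  have hp := Real.pi_pos
  have h4 := Real.pi_lt_four
  exact pow_le_pow_of_le_one (by positivity) (by linarith) (by omega)

lemma yy_tendsto : Tendsto yy atTop (𝓝 2) := by
  obtain ⟨K, hK, hy⟩ := yy_bound
  have hp := Real.pi_pos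
  rw [tendsto_iff_dist_tendsto_zero]
  have hg := geo.const_mul K
  rw [mul_zero] at hg
  refine squeeze_zero' (Eventually.of_forall fun _ => dist_nonneg) ?_ hg
  filter_upwards [eventually_ge_atTop 1] with N hN
  rw [Real.dist_eq]
  refine (hy N hN).trans ?_
  have : 1 ≤ ((N:ℝ) + 2) ^ 2 := by
    have : (0:ℝ) ≤ N := Nat.cast_nonneg N
    nlinarith
  gcongr
  exact le_mul_of_one_le_left (by positivity) this

lemma err_tendsto (c : ℕ → ℝ) (hc0 : ∀ N, 0 ≤ c N) (hc : ∀ N, c N ≤ ((N:ℝ) + 2) ^ 2) (i : ℕ) :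
    Tendsto (fun N => c N * (yy (N+i) / yy N - 1)) atTop (𝓝 0) := by
  obtain ⟨K, hK, hy⟩ := yy_bound
  have hp := Real.pi_pos
  have hnum : Tendsto (fun N => c N * (yy (N+i) - yy N)) atTop (𝓝 0) := by
    have hg := geo.const_mul (2 * K)
    rw [mul_zero] at hg
    refine squeeze_zero_norm' ?_ hg
    filter_upwards [eventually_ge_atTop 1] with N hN
    rw [Real.norm_eq_abs, abs_mul, abs_of_nonneg (hc0 N)]
    have h1 := hy N hN
    have h2 := (hy (N+i) (by omega)).trans (mul_le_mul_of_nonneg_left (pi6_le N i) hK)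
    have h3 : |yy (N+i) - yy N| ≤ 2 * K * (Real.pi / 6) ^ N := by
      rw [abs_le] at *
      constructor <;> linarith
    calc _ ≤ ((N:ℝ) + 2) ^ 2 * (2 * K * (Real.pi / 6) ^ N) := by
          gcongr
          exact hc N
      _ = _ := by ring
  have := hnum.div yy_tendsto two_ne_zero
  rw [zero_div] at this
  refine this.congr' ?_
  filter_upwards [yy_tendsto.eventually_ne two_ne_zero] with N hN
  simp only [Pi.div_apply]
  field_simp

lemma ratio1 (N : ℕ) : EE (N+1) / EE N = ((N:ℝ)+1) / (Real.pi/2) * (yy (N+1) / yy N) := by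
  have hp := Real.pi_pos
  have hf : (0:ℝ) < N.factorial := by exact_mod_cast N.factorial_pos
  simp only [yy, Nat.factorial_succ]
  push_cast
  by_cases h : EE N = 0
  · simp [h]
  · field_simp
    ring

lemma ratio2 (N : ℕ) : EE (N+2) / EE N =
    ((N:ℝ)+1) * ((N:ℝ)+2) / (Real.pi/2)^2 * (yy (N+2) / yy N) := by
  have hp := Real.pi_pos
  have hf : (0:ℝ) < N.factorial := by exact_mod_cast N.factorial_pos
  simp only [yy, Nat.factorial_succ]
  push_cast
  by_cases h : EE N = 0
  · simp [h]
  · field_simp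
    ring

lemma var_tendsto : Tendsto (fun N : ℕ => lemVar N - (4 / Real.pi ^ 2 + 2 / Real.pi - 1) * N) atTop
    (𝓝 (-1 + 2 / Real.pi + 4 / Real.pi ^ 2)) := by
  have hp := Real.pi_pos
  have hN0 : ∀ N : ℕ, (0:ℝ) ≤ N := fun N => Nat.cast_nonneg N
  have t1 := err_tendsto (fun N => (N:ℝ) + 1) (fun N => by positivity)
    (fun N => by nlinarith [hN0 N]) 1
  have t2 := err_tendsto (fun N => ((N:ℝ) + 1) ^ 2) (fun N => by positivity)
    (fun N => by nlinarith [hN0 N]) 1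
  have t3 := err_tendsto (fun N => ((N:ℝ) + 1) * (N + 2)) (fun N => by positivity)
    (fun N => by nlinarith [hN0 N]) 2
  have t := ((((t1.const_mul (2 / Real.pi)).add (t3.const_mul (4 / Real.pi ^ 2))).sub
    (t2.const_mul (8 / Real.pi ^ 2))).sub ((t1.pow 2).const_mul (4 / Real.pi ^ 2))).const_add
    (-1 + 2 / Real.pi + 4 / Real.pi ^ 2)
  norm_num at t
  refine t.congr' ?_
  filter_upwards [eventually_ge_atTop 1] with N hN
  rw [var_eq hN, ratio1, ratio2]
  generalize yy (N+1) / yy N = A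
  generalize yy (N+2) / yy N = B
  field_simp
  ring

end Lem

/-- `σ_N² = (4/π² + 2/π − 1)·N + O(1)`. -/
theorem var_outdegTwo_asymptotic :
    ∃ C : ℝ, 0 < C ∧ ∀ N : ℕ, 1 ≤ N →
      |lemVar N - (4 / Real.pi ^ 2 + 2 / Real.pi - 1) * N| ≤ C := by
  obtain ⟨C, hC⟩ := (Metric.isBounded_range_of_tendsto _ Lem.var_tendsto).exists_norm_le
  refine ⟨max C 1, by positivity, fun N _ => ?_⟩
  exact (hC _ ⟨N, rfl⟩).trans (le_max_left _ _)
end
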